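/- arXiv:0712.0819 — 2 statements merged into one kernel-verified Lean document; each statement's English description precedes it below -/
import Mathlib

section
/- Let q be a complex-valued quadratic form on ℝ^{2n} with Re q(X) ≤ 0 for all X ∈ ℝ^{2n}, with Hamilton map F and singular space S. For every λ ∈ ℝ, let S_λ = (Ker(F − λ) ⊕ Ker(F + λ)) ∩ ℝ^{2n} (so S_0 = Ker F ∩ ℝ^{2n}). Then for every λ ∈ ℝ one has (Re F)S_λ = {0}, (Im F)S_λ ⊆ S_λ, and consequently S_λ ⊆ S. -/
open Matrix

/-- The canonical symplectic form `σ((x,ξ),(y,η)) = ξ·y − x·η` on `R^{n+n}`,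
where the first `n` coordinates are `x` and the last `n` coordinates are `ξ`.
Over `R = ℂ` this is the ℂ-bilinear extension of the real canonical symplectic form. -/
def symp {R : Type*} [CommRing R] {n : ℕ} (X Y : Fin (n + n) → R) : R :=
  ∑ i : Fin n, (X (Fin.natAdd n i) * Y (Fin.castAdd n i)
    - X (Fin.castAdd n i) * Y (Fin.natAdd n i))

/-- The canonical inclusion `ℝ^{2n} ⊆ ℂ^{2n}`. -/
def cx {n : ℕ} (X : Fin (n + n) → ℝ) : Fin (n + n) → ℂ := fun i => (X i : ℂ)

/-- The real part of a complex matrix. -/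
def ReM {n : ℕ} (F : Matrix (Fin (n + n)) (Fin (n + n)) ℂ) :
    Matrix (Fin (n + n)) (Fin (n + n)) ℝ := F.map Complex.re

/-- The imaginary part of a complex matrix. -/
def ImM {n : ℕ} (F : Matrix (Fin (n + n)) (Fin (n + n)) ℂ) :
    Matrix (Fin (n + n)) (Fin (n + n)) ℝ := F.map Complex.im

/-- The singular space `S = (⋂_{j=0}^{2n−1} Ker[Re F ∘ (Im F)^j]) ∩ ℝ^{2n}`
associated to a quadratic form with Hamilton map `F`. -/
def singularSpace {n : ℕ} (F : Matrix (Fin (n + n)) (Fin (n + n)) ℂ) :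
    Set (Fin (n + n) → ℝ) :=
  {X | ∀ j < n + n, (ReM F * ImM F ^ j).mulVec X = 0}

/-- The space `S_λ = (Ker(F − λ) ⊕ Ker(F + λ)) ∩ ℝ^{2n}`: real vectors which are the sum
of an eigenvector (or zero) of `F` for the eigenvalue `λ` and one for `−λ`. -/
def Slam {n : ℕ} (F : Matrix (Fin (n + n)) (Fin (n + n)) ℂ) (l : ℝ) :
    Set (Fin (n + n) → ℝ) :=
  {X | ∃ u v : Fin (n + n) → ℂ, F.mulVec u = (l : ℂ) • u ∧
    F.mulVec v = (-(l : ℂ)) • v ∧ cx X = u + v}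

/-!
Write `R = Re F` and `M = Im F`. If `F (a + i b) = l (a + i b)` with `l` real, then
`R a - M b = l a` and `R b + M a = l b`; pairing these with `a` and `b` under the symplectic form
`ω`, the terms in `l` vanish because `ω` is alternating, and the terms in `M` cancel because `M` is
skew-adjoint, so `ω a (R a) + ω b (R b) = 0`. As `ω x (R x) = Re q x ≤ 0`, both summands vanish.
By Cauchy–Schwarz `a` and `b` then lie in the radical of the semidefinite form `ω x (R y)`, which
is `ker R`. Hence `Re F` vanishes on `S_λ`, where `F` therefore acts as `i Im F`; since `F`
preserves the eigenspaces, `Im F` preserves `S_λ`.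
-/

section SkewAdjoint

variable {K V : Type*} [CommRing K] [AddCommGroup V] [Module K V] {ω : LinearMap.BilinForm K V}
  {R M : V →ₗ[K] V}

lemma isSymm_compRight_of_isSkewAdjoint (hω : ω.IsAlt) (hR : ω.IsSkewAdjoint R) :
    (ω.compRight R).IsSymm where
  eq x y := by
    rw [LinearMap.isSkewAdjoint_iff_neg_self_adjoint] at hR
    calc ω x (R y) = -ω (R y) x := (hω.neg_eq _ _).symm
      _ = ω y (R x) := by simp [hR y x]

lemma apply_add_apply_eq_zero_of_isSkewAdjoint (hω : ω.IsAlt) (hM : ω.IsSkewAdjoint M)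
    {a b : V} {c : K} (ha : R a - M b = c • a) (hb : R b + M a = c • b) :
    ω a (R a) + ω b (R b) = 0 := by
  have hRa : ω a (R a) = ω a (M b) := by
    rw [sub_eq_iff_eq_add.mp ha, map_add, map_smul, hω.self_eq_zero, smul_zero, zero_add]
  have hRb : ω b (R b) = -ω b (M a) := by
    rw [eq_sub_of_add_eq hb, map_sub, map_smul, hω.self_eq_zero, smul_zero, zero_sub]
  have hsymm : ω a (M b) = ω b (M a) := (isSymm_compRight_of_isSkewAdjoint hω hM).eq a b
  rw [hRa, hRb, hsymm, add_neg_cancel]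

variable [LinearOrder K] [IsStrictOrderedRing K]

lemma map_eq_zero_of_isSkewAdjoint_of_nonpos (hω : ω.IsAlt) (hsep : ω.SeparatingRight)
    (hR : ω.IsSkewAdjoint R) (hneg : ∀ x, ω x (R x) ≤ 0) {a : V} (ha : ω a (R a) = 0) :
    R a = 0 := by
  have hsymm := isSymm_compRight_of_isSkewAdjoint hω hR
  have hker : a ∈ LinearMap.ker (-ω.compRight R) := by
    refine (LinearMap.BilinForm.apply_apply_same_eq_zero_iff _ (fun x ↦ ?_)
      (LinearMap.BilinForm.isSymm_iff.mp hsymm.neg)).mp ?_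
    · simpa using hneg x
    · simpa using ha
  refine hsep _ fun y ↦ ?_
  calc ω y (R a) = ω a (R y) := hsymm.eq y a
    _ = 0 := by simpa using LinearMap.congr_fun hker y

lemma map_eq_zero_of_map_sub_eq_smul_of_map_add_eq_smul (hω : ω.IsAlt) (hsep : ω.SeparatingRight)
    (hR : ω.IsSkewAdjoint R) (hM : ω.IsSkewAdjoint M) (hneg : ∀ x, ω x (R x) ≤ 0)
    {a b : V} {c : K} (ha : R a - M b = c • a) (hb : R b + M a = c • b) :
    R a = 0 ∧ R b = 0 := by
  have hsum := apply_add_apply_eq_zero_of_isSkewAdjoint hω hM ha hb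
  have hRa : ω a (R a) = 0 := (hneg a).antisymm (by linarith [hneg b])
  have hRb : ω b (R b) = 0 := (hneg b).antisymm (by linarith [hneg a])
  exact ⟨map_eq_zero_of_isSkewAdjoint_of_nonpos hω hsep hR hneg hRa,
    map_eq_zero_of_isSkewAdjoint_of_nonpos hω hsep hR hneg hRb⟩

end SkewAdjoint

section SympForm

variable (R : Type*) [CommRing R] (n : ℕ)

/-- The canonical symplectic form `symp` as a bundled bilinear form, giving access to the library
notions of alternating and separating forms and of skew-adjoint maps. -/
def sympForm : LinearMap.BilinForm R (Fin (n + n) → R) :=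
  LinearMap.mk₂ R symp
    (fun X X' Y ↦ by
      simp only [symp, Pi.add_apply, ← Finset.sum_add_distrib]
      exact Finset.sum_congr rfl fun i _ ↦ by ring)
    (fun c X Y ↦ by
      simp only [symp, Pi.smul_apply, smul_eq_mul, Finset.mul_sum]
      exact Finset.sum_congr rfl fun i _ ↦ by ring)
    (fun X Y Y' ↦ by
      simp only [symp, Pi.add_apply, ← Finset.sum_add_distrib]
      exact Finset.sum_congr rfl fun i _ ↦ by ring)
    (fun c X Y ↦ by
      simp only [symp, Pi.smul_apply, smul_eq_mul, Finset.mul_sum]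
      exact Finset.sum_congr rfl fun i _ ↦ by ring)

variable {R n}

lemma sympForm_apply (X Y : Fin (n + n) → R) : sympForm R n X Y = symp X Y := rfl

lemma isAlt_sympForm : (sympForm R n).IsAlt := fun X ↦ by
  rw [sympForm_apply]
  exact Finset.sum_eq_zero fun i _ ↦ by ring

lemma separatingRight_sympForm : (sympForm R n).SeparatingRight := fun Y hY ↦ by
  funext k
  refine Fin.addCases (fun i ↦ ?_) (fun i ↦ ?_) k
  · simpa [sympForm_apply, symp, Pi.single_apply, -Fin.natAdd_eq_addNat]
      using hY (Fin.append 0 (Pi.single i 1))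
  · simpa [sympForm_apply, symp, Pi.single_apply, -Fin.natAdd_eq_addNat]
      using hY (Fin.append (Pi.single i 1) 0)

end SympForm

section RealImaginaryParts

variable {n : ℕ} {F : Matrix (Fin (n + n)) (Fin (n + n)) ℂ}

lemma re_symp_cx_left (X : Fin (n + n) → ℝ) (W : Fin (n + n) → ℂ) :
    (symp (cx X) W).re = symp X (Complex.re ∘ W) := by
  simp [symp, cx]

lemma im_symp_cx_left (X : Fin (n + n) → ℝ) (W : Fin (n + n) → ℂ) :
    (symp (cx X) W).im = symp X (Complex.im ∘ W) := by
  simp [symp, cx]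

lemma re_symp_cx_right (W : Fin (n + n) → ℂ) (X : Fin (n + n) → ℝ) :
    (symp W (cx X)).re = symp (Complex.re ∘ W) X := by
  simp [symp, cx]

lemma im_symp_cx_right (W : Fin (n + n) → ℂ) (X : Fin (n + n) → ℝ) :
    (symp W (cx X)).im = symp (Complex.im ∘ W) X := by
  simp [symp, cx]

lemma re_comp_mulVec (F : Matrix (Fin (n + n)) (Fin (n + n)) ℂ) (u : Fin (n + n) → ℂ) :
    Complex.re ∘ (F *ᵥ u) = ReM F *ᵥ (Complex.re ∘ u) - ImM F *ᵥ (Complex.im ∘ u) := by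
  ext i
  simp [mulVec, dotProduct, ReM, ImM, Finset.sum_sub_distrib]

lemma im_comp_mulVec (F : Matrix (Fin (n + n)) (Fin (n + n)) ℂ) (u : Fin (n + n) → ℂ) :
    Complex.im ∘ (F *ᵥ u) = ReM F *ᵥ (Complex.im ∘ u) + ImM F *ᵥ (Complex.re ∘ u) := by
  ext i
  simp [mulVec, dotProduct, ReM, ImM, Finset.sum_add_distrib]

lemma re_comp_mulVec_cx (F : Matrix (Fin (n + n)) (Fin (n + n)) ℂ) (X : Fin (n + n) → ℝ) :
    Complex.re ∘ (F *ᵥ cx X) = ReM F *ᵥ X := by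
  ext i
  simp [mulVec, dotProduct, ReM, cx]

lemma im_comp_mulVec_cx (F : Matrix (Fin (n + n)) (Fin (n + n)) ℂ) (X : Fin (n + n) → ℝ) :
    Complex.im ∘ (F *ᵥ cx X) = ImM F *ᵥ X := by
  ext i
  simp [mulVec, dotProduct, ImM, cx]

lemma mulVec_cx (F : Matrix (Fin (n + n)) (Fin (n + n)) ℂ) (X : Fin (n + n) → ℝ) :
    F *ᵥ cx X = cx (ReM F *ᵥ X) + Complex.I • cx (ImM F *ᵥ X) := by
  rw [← re_comp_mulVec_cx, ← im_comp_mulVec_cx]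
  ext i
  simp [cx, mul_comm Complex.I, Complex.re_add_im]

lemma isSkewAdjoint_mulVecLin_ReM (hF : (sympForm ℂ n).IsSkewAdjoint F.mulVecLin) :
    (sympForm ℝ n).IsSkewAdjoint (ReM F).mulVecLin := by
  rw [LinearMap.isSkewAdjoint_iff_neg_self_adjoint] at hF ⊢
  intro X Y
  have h : (symp (F *ᵥ cx X) (cx Y)).re = -(symp (cx X) (F *ᵥ cx Y)).re :=
    congrArg Complex.re (hF (cx X) (cx Y))
  rwa [re_symp_cx_left, re_symp_cx_right, re_comp_mulVec_cx, re_comp_mulVec_cx] at h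

lemma isSkewAdjoint_mulVecLin_ImM (hF : (sympForm ℂ n).IsSkewAdjoint F.mulVecLin) :
    (sympForm ℝ n).IsSkewAdjoint (ImM F).mulVecLin := by
  rw [LinearMap.isSkewAdjoint_iff_neg_self_adjoint] at hF ⊢
  intro X Y
  have h : (symp (F *ᵥ cx X) (cx Y)).im = -(symp (cx X) (F *ᵥ cx Y)).im :=
    congrArg Complex.im (hF (cx X) (cx Y))
  rwa [im_symp_cx_left, im_symp_cx_right, im_comp_mulVec_cx, im_comp_mulVec_cx] at h

end RealImaginaryParts

section SingularSpace

variable {n : ℕ} {F : Matrix (Fin (n + n)) (Fin (n + n)) ℂ}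

lemma subset_singularSpace {S : Set (Fin (n + n) → ℝ)} (hRe : ∀ X ∈ S, ReM F *ᵥ X = 0)
    (hIm : Set.MapsTo (ImM F).mulVec S S) : S ⊆ singularSpace F := by
  intro X hX j _
  have hpow : (ImM F ^ j) *ᵥ X ∈ S := by
    rw [← toLin'_apply, toLin'_pow, Module.End.pow_apply]
    exact hIm.iterate j hX
  rw [← mulVec_mulVec, hRe _ hpow]

lemma zero_mem_Slam (l : ℝ) : 0 ∈ Slam F l :=
  ⟨0, 0, by simp, by simp, by ext; simp [cx]⟩

lemma ImM_mulVec_mem_Slam {l : ℝ} {X : Fin (n + n) → ℝ} (hX : X ∈ Slam F l)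
    (hRe : ReM F *ᵥ X = 0) : ImM F *ᵥ X ∈ Slam F l := by
  obtain ⟨u, v, hu, hv, huv⟩ := hX
  have hF : F *ᵥ cx X = Complex.I • cx (ImM F *ᵥ X) := by
    rw [mulVec_cx, hRe]
    ext i
    simp [cx]
  refine ⟨-Complex.I • F *ᵥ u, -Complex.I • F *ᵥ v, ?_, ?_, ?_⟩
  · rw [mulVec_smul, hu, mulVec_smul, hu, smul_comm]
  · rw [mulVec_smul, hv, mulVec_smul, hv, smul_comm]
  · rw [← smul_add, ← mulVec_add, ← huv, hF, smul_smul]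
    simp

lemma ReM_mulVec_re_eq_zero_of_mulVec_eq_smul
    (hF : (sympForm ℂ n).IsSkewAdjoint F.mulVecLin)
    (hneg : ∀ X : Fin (n + n) → ℝ, (symp (cx X) (F *ᵥ cx X)).re ≤ 0)
    {l : ℝ} {u : Fin (n + n) → ℂ} (hu : F *ᵥ u = (l : ℂ) • u) :
    ReM F *ᵥ (Complex.re ∘ u) = 0 := by
  have hnegRe (X : Fin (n + n) → ℝ) : sympForm ℝ n X ((ReM F).mulVecLin X) ≤ 0 := by
    simpa only [sympForm_apply, mulVecLin_apply, re_symp_cx_left, re_comp_mulVec_cx] using hneg X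
  have hre : ReM F *ᵥ (Complex.re ∘ u) - ImM F *ᵥ (Complex.im ∘ u) = l • (Complex.re ∘ u) := by
    rw [← re_comp_mulVec, hu]
    ext i
    simp
  have him : ReM F *ᵥ (Complex.im ∘ u) + ImM F *ᵥ (Complex.re ∘ u) = l • (Complex.im ∘ u) := by
    rw [← im_comp_mulVec, hu]
    ext i
    simp
  exact (map_eq_zero_of_map_sub_eq_smul_of_map_add_eq_smul isAlt_sympForm separatingRight_sympForm
    (isSkewAdjoint_mulVecLin_ReM hF) (isSkewAdjoint_mulVecLin_ImM hF) hnegRe hre him).1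

lemma ReM_mulVec_eq_zero_of_mem_Slam (hF : (sympForm ℂ n).IsSkewAdjoint F.mulVecLin)
    (hneg : ∀ X : Fin (n + n) → ℝ, (symp (cx X) (F *ᵥ cx X)).re ≤ 0)
    {l : ℝ} {X : Fin (n + n) → ℝ} (hX : X ∈ Slam F l) : ReM F *ᵥ X = 0 := by
  obtain ⟨u, v, hu, hv, huv⟩ := hX
  have hre : X = Complex.re ∘ u + Complex.re ∘ v := by
    ext i
    simpa [cx] using congrArg Complex.re (congrFun huv i)
  have hv' : F *ᵥ v = ((-l : ℝ) : ℂ) • v := by rw [hv, Complex.ofReal_neg]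
  rw [hre, mulVec_add, ReM_mulVec_re_eq_zero_of_mulVec_eq_smul hF hneg hu,
    ReM_mulVec_re_eq_zero_of_mulVec_eq_smul hF hneg hv', add_zero]

end SingularSpace

/-- Let `q` be a complex-valued quadratic form on `ℝ^{2n}` with
`Re q ≤ 0`, Hamilton map `F` and singular space `S`. For every `λ ∈ ℝ`, the space
`S_λ = (Ker(F − λ) ⊕ Ker(F + λ)) ∩ ℝ^{2n}` satisfies `(Re F) S_λ = {0}`,
`(Im F) S_λ ⊆ S_λ`, and consequently `S_λ ⊆ S`. -/
theorem Slam_subset_singularSpace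
    (n : ℕ) (hn : 1 ≤ n)
    (q : (Fin (n + n) → ℂ) → ℂ)
    (F : Matrix (Fin (n + n)) (Fin (n + n)) ℂ)
    (hq : ∀ X : Fin (n + n) → ℂ, q X = symp X (F.mulVec X))
    (hskew : ∀ X Y : Fin (n + n) → ℂ, symp (F.mulVec X) Y = -symp X (F.mulVec Y))
    (hre : ∀ X : Fin (n + n) → ℝ, (q (cx X)).re ≤ 0) :
    ∀ l : ℝ,
      (fun X => (ReM F).mulVec X) '' Slam F l = {0} ∧
      (fun X => (ImM F).mulVec X) '' Slam F l ⊆ Slam F l ∧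
      Slam F l ⊆ singularSpace F := by
  intro l
  have hF : (sympForm ℂ n).IsSkewAdjoint F.mulVecLin :=
    (LinearMap.isSkewAdjoint_iff_neg_self_adjoint _).mpr hskew
  have hneg (X : Fin (n + n) → ℝ) : (symp (cx X) (F *ᵥ cx X)).re ≤ 0 := hq (cx X) ▸ hre X
  have hRe : ∀ X ∈ Slam F l, ReM F *ᵥ X = 0 := fun X hX ↦
    ReM_mulVec_eq_zero_of_mem_Slam hF hneg hX
  have hIm : Set.MapsTo (ImM F).mulVec (Slam F l) (Slam F l) := fun X hX ↦
    ImM_mulVec_mem_Slam hX (hRe X hX)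
  refine ⟨?_, hIm.image_subset, subset_singularSpace hRe hIm⟩
  exact Set.eq_singleton_iff_nonempty_unique_mem.mpr
    ⟨⟨_, 0, zero_mem_Slam l, rfl⟩, Set.forall_mem_image.mpr hRe⟩
end

section
/- Let q be a complex-valued quadratic form on ℝ^{2n} with Re q(X) ≤ 0 for all X ∈ ℝ^{2n}, with Hamilton map F and singular space S, and assume q is elliptic on S (X ∈ S and q(X) = 0 imply X = 0). Then Ker F ∩ ℝ^{2n} = {0}; in particular F has no real eigenvector with eigenvalue 0. -/
open Matrix

/-!
The matrices `Re F` and `Im F` are real, so a real vector in `Ker F` is annihilated by both of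
them. It therefore lies in the singular space, and `q` vanishes there because `q(X) = σ(X, FX)`;
ellipticity on the singular space forces it to be zero.
-/

/-- `F` is the Hamilton map of the quadratic form `q`. The characterization `q(X;Y) = σ(X, FY)`
by the polarized form is split into its restriction to the diagonal and the skew-symmetry of `F`
with respect to `σ`, which expresses the symmetry of `q(·;·)`. -/
structure IsHamiltonMap {n : ℕ} (F : Matrix (Fin (n + n)) (Fin (n + n)) ℂ)
    (q : (Fin (n + n) → ℂ) → ℂ) : Prop where
  apply_eq_symp (X : Fin (n + n) → ℂ) : q X = symp X (F *ᵥ X)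
  symp_mulVec_left (X Y : Fin (n + n) → ℂ) : symp (F *ᵥ X) Y = -symp X (F *ᵥ Y)

theorem mul_pow_mulVec_eq_zero {R ι κ : Type*} [Semiring R] [Fintype ι] [DecidableEq ι]
    {A : Matrix κ ι R} {B : Matrix ι ι R} {x : ι → R} (hA : A *ᵥ x = 0) (hB : B *ᵥ x = 0)
    (j : ℕ) : (A * B ^ j) *ᵥ x = 0 := by
  cases j with
  | zero => rwa [pow_zero, Matrix.mul_one]
  | succ j => rw [pow_succ, ← Matrix.mul_assoc, ← mulVec_mulVec, hB, mulVec_zero]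

section RealVectors

variable {ι κ : Type*} [Fintype ι] (A : Matrix κ ι ℂ) (x : ι → ℝ)

theorem re_mulVec_ofReal_apply (k : κ) :
    ((A *ᵥ fun i => (x i : ℂ)) k).re = (A.map Complex.re *ᵥ x) k := by
  simp [mulVec, dotProduct]

theorem im_mulVec_ofReal_apply (k : κ) :
    ((A *ᵥ fun i => (x i : ℂ)) k).im = (A.map Complex.im *ᵥ x) k := by
  simp [mulVec, dotProduct]

theorem mulVec_ofReal_eq_zero_iff :
    (A *ᵥ fun i => (x i : ℂ)) = 0 ↔ A.map Complex.re *ᵥ x = 0 ∧ A.map Complex.im *ᵥ x = 0 := by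
  simp only [funext_iff, Pi.zero_apply, Complex.ext_iff, Complex.zero_re, Complex.zero_im,
    re_mulVec_ofReal_apply, im_mulVec_ofReal_apply, forall_and]

end RealVectors

theorem symp_zero_right {R : Type*} [CommRing R] {n : ℕ} (X : Fin (n + n) → R) :
    symp X 0 = 0 := by
  simp [symp]

section HamiltonMap

variable {n : ℕ} {F : Matrix (Fin (n + n)) (Fin (n + n)) ℂ} {X : Fin (n + n) → ℝ}

theorem mulVec_cx_eq_zero_iff : F *ᵥ cx X = 0 ↔ ReM F *ᵥ X = 0 ∧ ImM F *ᵥ X = 0 :=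
  mulVec_ofReal_eq_zero_iff F X

theorem mem_singularSpace_of_mulVec_cx_eq_zero (hX : F *ᵥ cx X = 0) : X ∈ singularSpace F := by
  obtain ⟨hRe, hIm⟩ := mulVec_cx_eq_zero_iff.mp hX
  exact fun j _ => mul_pow_mulVec_eq_zero hRe hIm j

theorem IsHamiltonMap.apply_eq_zero_of_mulVec_eq_zero {q : (Fin (n + n) → ℂ) → ℂ}
    (hF : IsHamiltonMap F q) {Z : Fin (n + n) → ℂ} (hZ : F *ᵥ Z = 0) : q Z = 0 := by
  rw [hF.apply_eq_symp, hZ, symp_zero_right]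

end HamiltonMap

theorem real_kernel_trivial_of_elliptic_on_singularSpace_general {n : ℕ}
    {q : (Fin (n + n) → ℂ) → ℂ} {F : Matrix (Fin (n + n)) (Fin (n + n)) ℂ}
    (hF : IsHamiltonMap F q) (hell : ∀ X ∈ singularSpace F, q (cx X) = 0 → X = 0) :
    {X : Fin (n + n) → ℝ | F *ᵥ cx X = 0} = {0} := by
  refine Set.eq_singleton_iff_unique_mem.mpr ⟨?_, fun X hX => ?_⟩
  · exact mulVec_cx_eq_zero_iff.mpr ⟨mulVec_zero _, mulVec_zero _⟩
  · exact hell X (mem_singularSpace_of_mulVec_cx_eq_zero hX)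
      (hF.apply_eq_zero_of_mulVec_eq_zero hX)

/-- Let `q` be a complex-valued quadratic form on `ℝ^{2n}` with
`Re q ≤ 0`, Hamilton map `F` and singular space `S`, and assume `q` is elliptic on
`S`. Then `Ker F ∩ ℝ^{2n} = {0}`; in particular `F` has no real eigenvector with
eigenvalue `0`. -/
theorem real_kernel_trivial_of_elliptic_on_singularSpace
    (n : ℕ) (hn : 1 ≤ n)
    (q : (Fin (n + n) → ℂ) → ℂ)
    (F : Matrix (Fin (n + n)) (Fin (n + n)) ℂ)
    (hq : ∀ X : Fin (n + n) → ℂ, q X = symp X (F.mulVec X))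
    (hskew : ∀ X Y : Fin (n + n) → ℂ, symp (F.mulVec X) Y = -symp X (F.mulVec Y))
    (hre : ∀ X : Fin (n + n) → ℝ, (q (cx X)).re ≤ 0)
    (hell : ∀ X ∈ singularSpace F, q (cx X) = 0 → X = 0) :
    {X : Fin (n + n) → ℝ | F.mulVec (cx X) = 0} = {0} :=
  real_kernel_trivial_of_elliptic_on_singularSpace_general ⟨hq, hskew⟩ hell
end
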